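/- arXiv:2104.13356 — 5 statements merged into one kernel-verified Lean document; each statement's English description precedes it below -/
import Mathlib

section
/- Let α ∈ (0,1) and ε ∈ (0,1) be given. Then there exists h₀ > 0 such that for all h ∈ (0, h₀], every complex number z satisfying the resonance equation h^(−α)·exp(2iz/h) − h^(−α) + 2iz/h = 0 and ε ≤ |z| ≤ 1/ε obeys 0 ≤ −Im z − (h/2)·ln|2·h^(α−1)·Re z| ≤ (5/4)·h^(3−2α)·ε^(−2). -/
open Complex Real

lemma res_small (α ε : ℝ) (hα : α ∈ Set.Ioo (0:ℝ) 1) (hε : ε ∈ Set.Ioo (0:ℝ) 1) :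
    ∃ h₀ > 0, ∀ h : ℝ, h ∈ Set.Ioc 0 h₀ → h ^ (1 - α) ≤ ε ∧
      h ^ α * (Real.log (3 / ε) - (1 - α) * Real.log h) ≤ 1 := by
  obtain ⟨ha0, ha1⟩ := hα
  have t1 : Filter.Tendsto (fun h : ℝ => h ^ (1 - α)) (nhdsWithin 0 (Set.Ioi 0)) (nhds 0) := by
    have := (Real.continuousAt_rpow_const 0 (1 - α) (Or.inr (by linarith))).tendsto
    rw [Real.zero_rpow (by linarith)] at this
    exact this.mono_left nhdsWithin_le_nhds
  have t2 : Filter.Tendsto (fun h : ℝ => h ^ α) (nhdsWithin 0 (Set.Ioi 0)) (nhds 0) := by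
    have := (Real.continuousAt_rpow_const 0 α (Or.inr (by linarith))).tendsto
    rw [Real.zero_rpow (by linarith)] at this
    exact this.mono_left nhdsWithin_le_nhds
  have t3 := tendsto_log_mul_rpow_nhdsGT_zero ha0
  have t4 : Filter.Tendsto (fun h : ℝ => h ^ α * (Real.log (3 / ε) - (1 - α) * Real.log h))
      (nhdsWithin 0 (Set.Ioi 0)) (nhds 0) := by
    have := (t2.mul_const (Real.log (3 / ε))).sub (t3.const_mul (1 - α))
    simp only [zero_mul, mul_zero, sub_zero] at this
    refine this.congr (fun h => ?_)
    ring
  have e := (t1.eventually (ge_mem_nhds hε.1)).and (t4.eventually (ge_mem_nhds one_pos))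
  obtain ⟨u, hu, hsub⟩ := mem_nhdsGT_iff_exists_Ioc_subset.1 e
  exact ⟨u, hu, fun h hh => hsub hh⟩

theorem resonance_width_alpha_small (α ε : ℝ) (hα : α ∈ Set.Ioo (0:ℝ) 1)
    (hε : ε ∈ Set.Ioo (0:ℝ) 1) :
    ∃ h₀ > 0, ∀ h : ℝ, h ∈ Set.Ioc 0 h₀ → ∀ z : ℂ,
      ((h ^ (-α) : ℝ) : ℂ) * Complex.exp (2 * Complex.I * z / (h : ℂ))
          - ((h ^ (-α) : ℝ) : ℂ) + 2 * Complex.I * z / (h : ℂ) = 0 →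
      ε ≤ ‖z‖ → ‖z‖ ≤ 1 / ε →
      0 ≤ -z.im - h / 2 * Real.log |2 * h ^ (α - 1) * z.re| ∧
        -z.im - h / 2 * Real.log |2 * h ^ (α - 1) * z.re|
          ≤ 5 / 4 * h ^ (3 - 2 * α) * ε ^ (-2 : ℝ) := by
  obtain ⟨h₀, hp, H⟩ := res_small α ε hα hε
  refine ⟨h₀, hp, fun h hh z heq hz1 hz2 => ?_⟩
  obtain ⟨hA, hB⟩ := H h hh
  have h0 : 0 < h := hh.1
  obtain ⟨he0, he1⟩ := hε
  obtain ⟨t, ht⟩ : ∃ t, t = h ^ (1 - α) := ⟨_, rfl⟩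
  have t0 : 0 < t := ht ▸ Real.rpow_pos_of_pos h0 _
  rw [← ht] at hA
  have hs : h ^ (α - 1) = 1 / t := by
    rw [ht, one_div, ← Real.rpow_neg h0.le]; congr 1; ring
  have hat : h ^ α * t = h := by
    rw [ht, ← Real.rpow_add h0]; simp
  have h3 : h ^ (3 - 2 * α) = h * t ^ 2 := by
    rw [ht, ← Real.rpow_natCast, ← Real.rpow_mul h0.le]
    nth_rewrite 2 [← Real.rpow_one h]
    rw [← Real.rpow_add h0]; congr 1; push_cast; ring
  have he2 : ε ^ (-2 : ℝ) = 1 / ε ^ 2 := by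
    rw [Real.rpow_neg he0.le, one_div]; norm_num
  have hlt : Real.log t = (1 - α) * Real.log h := by rw [ht, Real.log_rpow h0]
  have ha0 : 0 < h ^ α := Real.rpow_pos_of_pos h0 _
  rw [hs, h3, he2]
  -- the exponential
  have hexp : Complex.exp (2 * Complex.I * z / (h : ℂ)) = 1 - ((2 / t : ℝ) : ℂ) * (Complex.I * z) := by
    have hc : ((h ^ α : ℝ) : ℂ) ≠ 0 := by exact_mod_cast ha0.ne'
    have htc : (t : ℂ) ≠ 0 := by exact_mod_cast t0.ne'
    have hhc : (h : ℂ) = ((h ^ α : ℝ) : ℂ) * (t : ℂ) := by exact_mod_cast hat.symm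
    rw [Real.rpow_neg h0.le] at heq
    generalize Complex.exp (2 * Complex.I * z / (h : ℂ)) = E at heq
    rw [hhc] at heq
    push_cast at heq ⊢
    generalize ((h ^ α : ℝ) : ℂ) = c at heq hc
    field_simp at heq ⊢
    linear_combination heq
  have hnorm : Real.exp (-2 * z.im / h) = ‖1 - ((2 / t : ℝ) : ℂ) * (Complex.I * z)‖ := by
    rw [← hexp, Complex.norm_exp]
    congr 1
    rw [Complex.div_ofReal_re]
    simp
  have hnI : ‖((2 / t : ℝ) : ℂ) * (Complex.I * z)‖ = 2 / t * ‖z‖ := by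
    rw [norm_mul, norm_mul, Complex.norm_I, one_mul, Complex.norm_real, Real.norm_of_nonneg (by positivity)]
  have hup : Real.exp (-2 * z.im / h) ≤ 1 + 2 / t * ‖z‖ := by
    rw [hnorm, ← hnI]
    simpa using norm_sub_le (1:ℂ) (((2 / t : ℝ) : ℂ) * (Complex.I * z))
  have hlo : 2 / t * ‖z‖ - 1 ≤ Real.exp (-2 * z.im / h) := by
    rw [hnorm, ← hnI, norm_sub_rev]
    simpa using norm_sub_norm_le (((2 / t : ℝ) : ℂ) * (Complex.I * z)) 1
  have hsq : Real.exp (-2 * z.im / h) ^ 2 = (1 + 2 / t * z.im) ^ 2 + (2 / t * z.re) ^ 2 := by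
    rw [hnorm, Complex.sq_norm, Complex.normSq_apply]
    simp [-Complex.ofReal_div]
    ring
  have hy0 : z.im ≤ 0 := by
    have : 1 ≤ Real.exp (-2 * z.im / h) := by
      refine le_trans ?_ hlo
      have : 1 ≤ 1 / t * ‖z‖ := by
        rw [one_div_mul_eq_div, le_div_iff₀ t0]; linarith
      have h2 : 2 / t * ‖z‖ = 2 * (1 / t * ‖z‖) := by ring
      linarith
    have := (Real.one_le_exp_iff).1 this
    rw [le_div_iff₀ h0] at this
    linarith
  have hy1 : -2 * z.im ≤ t := by
    have h1 : Real.exp (-2 * z.im / h) ≤ 3 / ε / t := by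
      have e1 : 2 / t * ‖z‖ ≤ 2 / t * (1 / ε) := by gcongr
      have e2 : 1 ≤ 1 / ε / t := by
        rw [le_div_iff₀ t0, le_div_iff₀ he0]; nlinarith
      have e3 : 3 / ε / t = 1 / ε / t + 2 / t * (1 / ε) := by field_simp; norm_num
      linarith
    have h2 := (Real.le_log_iff_exp_le (by positivity)).2 h1
    rw [Real.log_div (by positivity) t0.ne', hlt, div_le_iff₀ h0] at h2
    calc _ ≤ _ := h2
      _ = (h ^ α * (Real.log (3 / ε) - (1 - α) * Real.log h)) * t := by
        nth_rewrite 2 [← hat]; ring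
      _ ≤ 1 * t := by gcongr
      _ = t := one_mul t
  have hx : ε ^ 2 / 2 ≤ z.re ^ 2 := by
    have : ε ^ 2 ≤ z.re * z.re + z.im * z.im := by
      rw [← Complex.normSq_apply, ← Complex.sq_norm]; gcongr
    nlinarith
  have hx0 : 0 < z.re ^ 2 := lt_of_lt_of_le (by positivity) hx
  have hxne : z.re ≠ 0 := by rintro h; simp [h] at hx0
  have hA0 : 0 < (2 / t * z.re) ^ 2 := by positivity
  have key : -z.im - h / 2 * Real.log |2 * (1 / t) * z.re|
      = h / 4 * Real.log (1 + (t + 2 * z.im) ^ 2 / (4 * z.re ^ 2)) := by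
    have e1 : 1 + (t + 2 * z.im) ^ 2 / (4 * z.re ^ 2)
        = Real.exp (-2 * z.im / h) ^ 2 / (2 / t * z.re) ^ 2 := by
      rw [hsq]; field_simp; ring
    rw [e1, Real.log_div (by positivity) hA0.ne', Real.log_pow, Real.log_pow, Real.log_exp,
      Real.log_abs]
    have : 2 * (1 / t) * z.re = 2 / t * z.re := by ring
    rw [this]; field_simp; push_cast; ring
  rw [key]
  have hq : 0 ≤ (t + 2 * z.im) ^ 2 / (4 * z.re ^ 2) := by positivity
  refine ⟨mul_nonneg (by positivity) (Real.log_nonneg (by linarith)), ?_⟩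
  have hl := Real.log_le_sub_one_of_pos (show 0 < 1 + (t + 2 * z.im) ^ 2 / (4 * z.re ^ 2) by linarith)
  have hb : (t + 2 * z.im) ^ 2 / (4 * z.re ^ 2) ≤ t ^ 2 / (4 * (ε ^ 2 / 2)) := by
    gcongr
    · linarith
    · linarith
  have hf : t ^ 2 / (4 * (ε ^ 2 / 2)) = 1 / 2 * (t ^ 2 * (1 / ε ^ 2)) := by field_simp; norm_num
  have hpos : 0 ≤ t ^ 2 * (1 / ε ^ 2) := by positivity
  calc _ ≤ h / 4 * (1 / 2 * (t ^ 2 * (1 / ε ^ 2))) := by gcongr; linarith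
    _ ≤ _ := by nlinarith [mul_nonneg h0.le hpos]
end

section
/- Let α > 1 and ε ∈ (0,1) be given. Then there exists h₀ > 0 such that for all h ∈ (0, h₀], every complex number z satisfying the resonance equation h^(−α)·exp(2iz/h) − h^(−α) + 2iz/h = 0 and ε ≤ |z| ≤ 1/ε obeys |Im z + (Re z)²·h^(2α−1)| ≤ 7·h^(2α+1)·(ln(h^(−α)))² + 34·ε^(−4)·h^(4α−3). -/
open Complex Real

lemma log_aux {u : ℝ} (hu : |u| ≤ 1/2) : |u - Real.log (1 + u)| ≤ 2 * u ^ 2 := by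
  obtain ⟨h1, h2⟩ := abs_le.mp hu
  have hp : 0 < 1 + u := by linarith
  have a := Real.log_le_sub_one_of_pos hp
  rw [abs_of_nonneg (by linarith)]
  suffices H : u - 2 * u ^ 2 ≤ Real.log (1 + u) by linarith
  refine le_trans ?_ (Real.one_sub_inv_le_log_of_pos hp)
  have : 1 - (1 + u)⁻¹ = u / (1 + u) := by field_simp; ring
  rw [this, le_div_iff₀ hp]
  nlinarith [mul_nonneg (by linarith : 0 ≤ 1 + 2 * u) (sq_nonneg u)]

set_option maxHeartbeats 2000000 in
lemma core (h k A x y : ℝ) (hh : 0 < h) (hh1 : h ≤ 1) (hk : 0 < k) (hA : 1 ≤ A)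
    (hkA : k * A ≤ 1 / 100) (hz : x ^ 2 + y ^ 2 ≤ A ^ 2)
    (heq : Real.exp (-4 * y / h) = (1 + 2 * y * k) ^ 2 + (2 * x * k) ^ 2) :
    |y + x ^ 2 * (h * k ^ 2)| ≤ 7 * (h ^ 3 * k ^ 2) + 34 * A ^ 4 * (h * k ^ 4) := by
  have hk1 : k ≤ 1 / 100 := by nlinarith
  have hyA : |y| ≤ A := abs_le_of_sq_le_sq (by nlinarith [sq_nonneg x]) (by linarith)
  obtain ⟨u, hu⟩ : ∃ u, u = 4 * y * k + 4 * (x ^ 2 + y ^ 2) * k ^ 2 := ⟨_, rfl⟩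
  have hlog : -4 * y / h = Real.log (1 + u) := by
    rw [← Real.log_exp (-4 * y / h), heq, hu]; congr 1; ring
  have hlog' : -4 * y = h * Real.log (1 + u) := by rw [← hlog]; field_simp
  have hkk : 0 < k ^ 2 := by positivity
  have hub : |u| ≤ 4 * |y| * k + 4 * (k ^ 2 * A ^ 2) := by
    rw [hu]
    refine (abs_add_le _ _).trans ?_
    rw [abs_mul, abs_mul, abs_of_pos hk, abs_of_nonneg (by positivity : 0 ≤ 4 * (x ^ 2 + y ^ 2) * k ^ 2)]
    norm_num
    nlinarith
  have hkA0 : 0 < k * A := by positivity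
  have hus : |u| ≤ 1 / 2 := by nlinarith
  have hL := log_aux hus
  have hlogu : |Real.log (1 + u)| ≤ 2 * |u| := by
    have h1 : |Real.log (1 + u)| ≤ |u| + |u - Real.log (1 + u)| := by
      have := abs_sub u (u - Real.log (1 + u))
      simpa using this
    have h2 : u ^ 2 = |u| * |u| := by rw [← sq, sq_abs]
    nlinarith [abs_nonneg u]
  have hy1 : 4 * |y| ≤ h * (2 * |u|) := by
    have : |-4 * y| = |h * Real.log (1 + u)| := by rw [hlog']
    rw [abs_mul, abs_mul, abs_of_pos hh] at this
    norm_num at this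
    rw [this]; gcongr
  have hhk : h * k ≤ 1 / 100 := by nlinarith
  have hhk0 : 0 < h * k := by positivity
  have hB : 0 < k ^ 2 * A ^ 2 := by positivity
  obtain ⟨B, hBd⟩ : ∃ B, B = k ^ 2 * A ^ 2 := ⟨_, rfl⟩
  rw [← hBd] at hB hub
  have hy2 : |y| ≤ 3 * (h * B) := by
    have h1 : h * |u| ≤ h * (4 * |y| * k + 4 * B) := by gcongr
    have h2 : (h * k) * |y| ≤ 1 / 100 * |y| := by gcongr
    have : 0 < h * B := by positivity
    nlinarith
  have hu2 : |u| ≤ 5 * B := by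
    have h1 : |y| * k ≤ 3 * (h * B) * k := by gcongr
    have h2 : (h * k) * B ≤ 1 / 100 * B := by gcongr
    nlinarith
  have husq : u ^ 2 ≤ 25 * B ^ 2 := by
    rw [← sq_abs]; nlinarith [abs_nonneg u]
  have hysq : y ^ 2 ≤ 9 * (h * B) ^ 2 := by
    rw [← sq_abs]; nlinarith [abs_nonneg y]
  have key : y + x ^ 2 * (h * k ^ 2) =
      h / 4 * (u - Real.log (1 + u)) + (-(h * k * y)) + (-(h * k ^ 2 * y ^ 2)) := by
    have : y = - (h * Real.log (1 + u)) / 4 := by linarith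
    have e : h / 4 * (u - Real.log (1 + u)) = h / 4 * u + y := by rw [mul_sub]; linarith
    rw [e, hu]; ring
  rw [key]
  have t1 : |h / 4 * (u - Real.log (1 + u))| ≤ h / 4 * (2 * (25 * B ^ 2)) := by
    rw [abs_mul, abs_of_pos (by positivity : 0 < h / 4)]
    have : |u - Real.log (1 + u)| ≤ 2 * (25 * B ^ 2) := by linarith
    gcongr
  have t2 : |-(h * k * y)| ≤ h * k * (3 * (h * B)) := by
    rw [abs_neg, abs_mul, abs_of_pos hhk0]; gcongr
  have t3 : |-(h * k ^ 2 * y ^ 2)| ≤ h * k ^ 2 * (9 * (h * B) ^ 2) := by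
    rw [abs_neg, abs_of_nonneg (by positivity)]; gcongr
  have t4 : h * k ^ 2 * (9 * (h * B) ^ 2) ≤ h * B ^ 2 := by
    have : h * k ^ 2 * (9 * (h * B) ^ 2) = 9 * (h * k) ^ 2 * (h * B ^ 2) := by ring
    rw [this]
    have : 9 * (h * k) ^ 2 ≤ 1 := by nlinarith
    have : 0 < h * B ^ 2 := by positivity
    nlinarith
  have t5 : h * k * (3 * (h * B)) ≤ 3 / 2 * (h ^ 3 * k ^ 2) + 3 / 2 * (h * B ^ 2) := by
    nlinarith [mul_nonneg hh.le (sq_nonneg (h * k - B))]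
  have e34 : 34 * A ^ 4 * (h * k ^ 4) = 34 * (h * B ^ 2) := by rw [hBd]; ring
  have p1 : 0 < h ^ 3 * k ^ 2 := by positivity
  have p2 : 0 < h * B ^ 2 := by positivity
  have tri := abs_add_three (h / 4 * (u - Real.log (1 + u))) (-(h * k * y)) (-(h * k ^ 2 * y ^ 2))
  rw [e34]
  linarith

theorem resonance_width_alpha_big (α ε : ℝ) (hα : 1 < α) (hε : ε ∈ Set.Ioo (0:ℝ) 1) :
    ∃ h₀ > 0, ∀ h : ℝ, h ∈ Set.Ioc 0 h₀ → ∀ z : ℂ,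
      ((h ^ (-α) : ℝ) : ℂ) * Complex.exp (2 * Complex.I * z / (h : ℂ))
          - ((h ^ (-α) : ℝ) : ℂ) + 2 * Complex.I * z / (h : ℂ) = 0 →
      ε ≤ ‖z‖ → ‖z‖ ≤ 1 / ε →
      |z.im + z.re ^ 2 * h ^ (2 * α - 1)|
        ≤ 7 * h ^ (2 * α + 1) * (Real.log (h ^ (-α))) ^ 2
          + 34 * ε ^ (-4 : ℝ) * h ^ (4 * α - 3) := by
  obtain ⟨he0, he1⟩ := hε
  refine ⟨min (Real.exp (-1)) ((ε / 100) ^ (1 / (α - 1))), by positivity, ?_⟩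
  rintro h ⟨hh, hle⟩ z hz - hzu
  have hle1 := hle.trans (min_le_left _ _)
  have hle2 := hle.trans (min_le_right _ _)
  have hh1 : h ≤ 1 := hle1.trans (Real.exp_le_one_iff.mpr (by norm_num))
  have hlogh : Real.log h ≤ -1 := (Real.log_le_iff_le_exp hh).mpr hle1
  have ha : 0 < α - 1 := by linarith
  obtain ⟨k, hkd⟩ : ∃ k, k = h ^ (α - 1) := ⟨_, rfl⟩
  have hk : 0 < k := by rw [hkd]; positivity
  have hke : k ≤ ε / 100 := by
    calc k ≤ ((ε / 100) ^ (1 / (α - 1))) ^ (α - 1) := by rw [hkd]; gcongr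
      _ = ε / 100 := by
        rw [← Real.rpow_mul (by positivity), one_div_mul_cancel ha.ne', Real.rpow_one]
  have hV : h ^ (-α) * (h * k) = 1 := by
    rw [hkd]
    nth_rewrite 2 [← Real.rpow_one h]
    rw [← Real.rpow_add hh, ← Real.rpow_add hh]
    simp
  have e1 : h ^ (2 * α - 1) = h * k ^ 2 := by
    rw [hkd, ← Real.rpow_natCast, ← Real.rpow_mul hh.le]
    nth_rewrite 2 [← Real.rpow_one h]
    rw [← Real.rpow_add hh]; congr 1; push_cast; ring
  have e2 : h ^ (2 * α + 1) = h ^ 3 * k ^ 2 := by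
    rw [hkd, ← Real.rpow_natCast, ← Real.rpow_natCast, ← Real.rpow_mul hh.le, ← Real.rpow_add hh]
    congr 1; push_cast; ring
  have e3 : h ^ (4 * α - 3) = h * k ^ 4 := by
    rw [hkd, ← Real.rpow_natCast, ← Real.rpow_mul hh.le]
    nth_rewrite 2 [← Real.rpow_one h]
    rw [← Real.rpow_add hh]; congr 1; push_cast; ring
  have e4 : ε ^ (-4 : ℝ) = (1 / ε) ^ 4 := by
    rw [Real.rpow_neg he0.le]; norm_cast; simp
  have hexp : Complex.exp (2 * Complex.I * z / (h : ℂ)) = 1 - 2 * Complex.I * z * (k : ℂ) := by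
    have hVc : ((h ^ (-α) : ℝ) : ℂ) * ((h : ℂ) * (k : ℂ)) = 1 := by exact_mod_cast hV
    have hhc : (h : ℂ) ≠ 0 := by exact_mod_cast hh.ne'
    generalize ((h ^ (-α) : ℝ) : ℂ) = V at *
    generalize Complex.exp (2 * Complex.I * z / (h : ℂ)) = E at *
    field_simp at hz
    linear_combination (k : ℂ) * hz + (1 - E) * hVc
  have heq : Real.exp (-4 * z.im / h) = (1 + 2 * z.im * k) ^ 2 + (2 * z.re * k) ^ 2 := by
    have hn := congrArg (fun w => ‖w‖ ^ 2) hexp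
    simp only [Complex.norm_exp] at hn
    rw [Complex.sq_norm, Complex.normSq_apply, ← Real.exp_nat_mul] at hn
    have hre : (2 * Complex.I * z / (h : ℂ)).re = -2 * z.im / h := by
      rw [Complex.div_ofReal_re]; simp
    rw [hre] at hn
    have : -4 * z.im / h = ((2 : ℕ) : ℝ) * (-2 * z.im / h) := by push_cast; ring
    rw [this, hn]
    simp
    ring
  have hA : 1 ≤ 1 / ε := by rw [le_div_iff₀ he0]; linarith
  have hkA : k * (1 / ε) ≤ 1 / 100 := by
    rw [mul_one_div, div_le_iff₀ he0]; linarith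
  have hzz : z.re ^ 2 + z.im ^ 2 ≤ (1 / ε) ^ 2 := by
    have : z.re ^ 2 + z.im ^ 2 = ‖z‖ ^ 2 := by
      rw [Complex.sq_norm, Complex.normSq_apply]; ring
    rw [this]; gcongr
  have C := core h k (1 / ε) z.re z.im hh hh1 hk hA hkA hzz heq
  rw [e1, e2, e3, e4]
  have hl : 1 ≤ (Real.log (h ^ (-α))) ^ 2 := by
    rw [Real.log_rpow hh]
    have : 1 ≤ -α * Real.log h := by nlinarith
    nlinarith
  have p1 : 0 < h ^ 3 * k ^ 2 := by positivity
  nlinarith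
end

section
/- Let α ∈ (0,1) and ε ∈ (0,1) be given. Then there exists h₀ > 0 such that for all h ∈ (0, h₀], every complex number z satisfying the resonance equation h^(−α)·exp(2iz/h) − h^(−α) + 2iz/h = 0 and ε ≤ |z| ≤ 1/ε obeys |Re z| ≥ ε/3 and |Im z| ≤ h·ln(4·ε^(−1)·h^(α−1)). -/
open Complex Real

theorem resonance_re_im_bounds (α ε : ℝ) (hα : α ∈ Set.Ioo (0:ℝ) 1)
    (hε : ε ∈ Set.Ioo (0:ℝ) 1) :
    ∃ h₀ > 0, ∀ h : ℝ, h ∈ Set.Ioc 0 h₀ → ∀ z : ℂ,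
      ((h ^ (-α) : ℝ) : ℂ) * Complex.exp (2 * Complex.I * z / (h : ℂ))
          - ((h ^ (-α) : ℝ) : ℂ) + 2 * Complex.I * z / (h : ℂ) = 0 →
      ε ≤ ‖z‖ → ‖z‖ ≤ 1 / ε →
      ε / 3 ≤ |z.re| ∧ |z.im| ≤ h * Real.log (4 * ε⁻¹ * h ^ (α - 1)) := by
  obtain ⟨ha0, ha1⟩ := hα
  obtain ⟨he0, he1⟩ := hε
  have h1a : 0 < 1 - α := by linarith
  refine ⟨min ((ε^2/8)^(α⁻¹)) ((ε/2)^((1-α)⁻¹)), by positivity, ?_⟩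
  rintro h ⟨hpos, hle⟩ z heq hz1 hz2
  have hA : h ^ α ≤ ε^2/8 := by
    have := Real.rpow_le_rpow hpos.le (hle.trans (min_le_left _ _)) ha0.le
    rwa [Real.rpow_inv_rpow (by positivity) ha0.ne'] at this
  have hB : h ^ (1-α) ≤ ε/2 := by
    have := Real.rpow_le_rpow hpos.le (hle.trans (min_le_right _ _)) h1a.le
    rwa [Real.rpow_inv_rpow (by positivity) h1a.ne'] at this
  set r := h ^ (α - 1) with hr
  have hrpos : 0 < r := Real.rpow_pos_of_pos hpos _
  have hhr : h * r = h ^ α := by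
    rw [hr, Real.rpow_sub_one hpos.ne']; field_simp
  have hrB : r * h ^ (1-α) = 1 := by
    rw [hr, ← Real.rpow_add hpos]; simp
  have hrge : 2 ≤ r * ε := by
    have := mul_le_mul_of_nonneg_left hB hrpos.le
    linarith
  have hna : h ^ (-α) * (h * r) = 1 := by
    rw [hhr, ← Real.rpow_add hpos]; simp
  have hnaC : ((h ^ (-α) : ℝ) : ℂ) * ((h:ℂ) * (r:ℂ)) = 1 := by exact_mod_cast hna
  have hC : (h:ℂ) ≠ 0 := by exact_mod_cast hpos.ne'
  have hw : Complex.exp (2 * Complex.I * z / (h : ℂ)) = 1 - 2 * Complex.I * z * r := by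
    have e2 : 2 * Complex.I * z / (h : ℂ) * h = 2 * Complex.I * z := by field_simp
    generalize Complex.exp (2 * Complex.I * z / (h : ℂ)) = w at *
    linear_combination (h * r : ℂ) * heq + (1 - w) * hnaC - r * e2
  have hnorm : ‖Complex.exp (2 * Complex.I * z / (h : ℂ))‖ = Real.exp (-(2 * z.im) / h) := by
    rw [Complex.norm_exp, Complex.div_ofReal_re]; simp
  have hn2 : ‖2 * Complex.I * z * (r:ℂ)‖ = 2 * ‖z‖ * r := by
    simp [abs_of_pos hrpos]
  rw [hw] at hnorm
  have hup : Real.exp (-(2 * z.im) / h) ≤ 1 + 2 * ‖z‖ * r := by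
    rw [← hnorm, ← hn2]; simpa using norm_sub_le (1:ℂ) (2 * Complex.I * z * (r:ℂ))
  have hlo : 2 * ‖z‖ * r - 1 ≤ Real.exp (-(2 * z.im) / h) := by
    rw [← hnorm, ← hn2, norm_sub_rev]
    simpa using norm_sub_norm_le (2 * Complex.I * z * (r:ℂ)) 1
  have hzr : ε * r ≤ ‖z‖ * r := by gcongr
  have hneg : z.im < 0 := by
    have : 1 < Real.exp (-(2 * z.im) / h) := by linarith
    rw [Real.one_lt_exp_iff] at this
    have := (div_pos_iff_of_pos_right hpos).1 this
    linarith
  set X := 4 * ε⁻¹ * r with hX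
  have hXpos : 0 < X := by positivity
  have hX8 : 1 ≤ ε⁻¹ * r := by
    have : 1 ≤ ε⁻¹ := (one_le_inv₀ he0).2 he1.le
    have : r * ε ≤ r := by nlinarith
    nlinarith
  have hupX : Real.exp (-(2 * z.im) / h) ≤ X := by
    have : ‖z‖ * r ≤ ε⁻¹ * r := by rw [one_div] at hz2; gcongr
    linarith
  have hlog : -(2 * z.im) / h ≤ Real.log X := (Real.le_log_iff_exp_le hXpos).2 hupX
  rw [div_le_iff₀ hpos] at hlog
  have him : |z.im| ≤ h * Real.log X := by
    rw [abs_of_neg hneg]; linarith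
  refine ⟨?_, him⟩
  have h3 : h * Real.log X ≤ h * X :=
    mul_le_mul_of_nonneg_left (Real.log_le_self hXpos.le) hpos.le
  have h4 : h * X ≤ ε / 2 := by
    have e : h * X = 4 * ε⁻¹ * (h * r) := by rw [hX]; ring
    rw [e, hhr]
    calc 4 * ε⁻¹ * h ^ α ≤ 4 * ε⁻¹ * (ε^2/8) := by gcongr
      _ = ε / 2 := by field_simp; norm_num
  have := Complex.norm_le_abs_re_add_abs_im z
  linarith
end

section
/- Let α > 1 and ε ∈ (0,1) be given. Then there exists h₀ > 0 such that for all h ∈ (0, h₀] and all integers k with π²k² ≤ 4·ε^(−2)·h^(−2), one has | −ln|1 + h^α·ln(h^(−α)) + 2πik·h^α| + h^α·ln(h^(−α)) + 2π²k²·h^(2α) | ≤ 65·ε^(−4)·h^(4α−4) + h^(2α)·(ln(h^(−α)))². -/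
open Complex Real

lemma sub_log_le_aux (x : ℝ) (hx : 0 ≤ x) : x - Real.log (1 + x) ≤ x ^ 2 / 2 := by
  have h := Real.le_log_one_add_of_nonneg hx
  have h2 : x - x ^ 2 / 2 ≤ 2 * x / (x + 2) := by
    rw [le_div_iff₀ (by linarith)]
    nlinarith [pow_nonneg hx 3]
  linarith

lemma core_aux (x M Y : ℝ) (hx : 0 ≤ x) (hM : 0 ≤ M) (hMY : M ≤ Y)
    (hc : x ≤ Y / 256 ∨ Y ≤ x / 2) :
    |-(Real.log ((1 + x) ^ 2 + M) / 2) + x + M / 2| ≤ 65 / 256 * Y ^ 2 + x ^ 2 := by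
  obtain ⟨v, hv⟩ : ∃ v, v = M / (1 + x) ^ 2 := ⟨_, rfl⟩
  have hx1 : 0 < (1 + x) ^ 2 := by positivity
  have hv0 : 0 ≤ v := by rw [hv]; positivity
  have hvM : v * (1 + x) ^ 2 = M := by rw [hv]; field_simp
  have hle : v ≤ M := by nlinarith [mul_nonneg hv0 hx, mul_nonneg hv0 (sq_nonneg x)]
  have hge : M * (1 - 2 * x) ≤ v := by
    rw [hv, le_div_iff₀ hx1]
    nlinarith [mul_nonneg hM (pow_nonneg hx 3), mul_nonneg hM (pow_nonneg hx 2)]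
  have hlog : Real.log ((1 + x) ^ 2 + M) = 2 * Real.log (1 + x) + Real.log (1 + v) := by
    rw [← hvM, show (1 + x) ^ 2 + v * (1 + x) ^ 2 = (1 + x) ^ 2 * (1 + v) by ring,
      Real.log_mul (by positivity) (by positivity), Real.log_pow]
    norm_num
  have a1 := sub_log_le_aux x hx
  have a2 := sub_log_le_aux v hv0
  have b1 := Real.log_le_sub_one_of_pos (show 0 < 1 + x by linarith)
  have b2 := Real.log_le_sub_one_of_pos (show 0 < 1 + v by linarith)
  rw [hlog, abs_of_nonneg (by linarith)]
  have hv2 : v ^ 2 ≤ Y ^ 2 := by gcongr; linarith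
  have hxM : x * M ≤ x * Y := by gcongr
  have hY : 0 ≤ Y := hM.trans hMY
  have : x * Y ≤ x ^ 2 / 2 + Y ^ 2 / 256 := by
    rcases hc with hc | hc
    · nlinarith [mul_le_mul_of_nonneg_right hc hY]
    · nlinarith [mul_le_mul_of_nonneg_left hc hx]
  nlinarith

lemma eventually_aux (α d : ℝ) (hα : 1 < α) (hd : 1 ≤ d) :
    ∀ᶠ h : ℝ in nhdsWithin 0 (Set.Ioi 0),
      h ^ α * Real.log (h ^ (-α)) ≤ 16 * d * h ^ (2 * α - 2) / 256 ∨
      16 * d * h ^ (2 * α - 2) ≤ h ^ α * Real.log (h ^ (-α)) / 2 := by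
  have hpos : ∀ᶠ h : ℝ in nhdsWithin 0 (Set.Ioi 0), 0 < h := self_mem_nhdsWithin
  rcases lt_or_ge α 2 with h2 | h2
  · have ht := (tendsto_log_mul_rpow_nhdsGT_zero (show 0 < 2 - α by linarith)).const_mul (-α)
    rw [mul_zero] at ht
    filter_upwards [hpos, ht.eventually (gt_mem_nhds (show (0:ℝ) < 1 / 16 by norm_num))]
      with h h0 hh
    left
    rw [Real.log_rpow h0]
    have e : h ^ α = h ^ (2 * α - 2) * h ^ (2 - α) := by
      rw [← Real.rpow_add h0]; congr 1; ring
    rw [e]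
    have hq : 0 < h ^ (2 * α - 2) := Real.rpow_pos_of_pos h0 _
    nlinarith [mul_le_mul_of_nonneg_left hh.le hq.le, mul_le_mul_of_nonneg_left hd hq.le]
  · have ht := Real.tendsto_log_nhdsGT_zero.eventually_le_atBot (-(32 * d))
    have h1 : ∀ᶠ h : ℝ in nhdsWithin 0 (Set.Ioi 0), h < 1 :=
      nhdsWithin_le_nhds (gt_mem_nhds one_pos)
    filter_upwards [hpos, ht, h1] with h h0 hl hlt
    right
    rw [Real.log_rpow h0]
    have hq : h ^ (2 * α - 2) ≤ h ^ α :=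
      Real.rpow_le_rpow_of_exponent_ge h0 hlt.le (by linarith)
    have hp : 0 < h ^ α := Real.rpow_pos_of_pos h0 _
    have hL : 32 * d ≤ -α * Real.log h := by nlinarith
    nlinarith [mul_le_mul_of_nonneg_left hL hp.le,
      mul_le_mul_of_nonneg_left hq (show 0 ≤ d by linarith)]

theorem log_modulus_expansion (α ε : ℝ) (hα : 1 < α) (hε : ε ∈ Set.Ioo (0:ℝ) 1) :
    ∃ h₀ > 0, ∀ h : ℝ, h ∈ Set.Ioc 0 h₀ → ∀ k : ℤ,
      π ^ 2 * (k : ℝ) ^ 2 ≤ 4 * ε ^ (-2 : ℝ) * h ^ (-2 : ℝ) →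
      |-Real.log (‖
            ((1 : ℂ) + ((h ^ α * Real.log (h ^ (-α)) : ℝ) : ℂ)
              + 2 * (π : ℂ) * Complex.I * (k : ℂ) * ((h ^ α : ℝ) : ℂ))‖)
          + h ^ α * Real.log (h ^ (-α)) + 2 * π ^ 2 * (k : ℝ) ^ 2 * h ^ (2 * α)|
        ≤ 65 * ε ^ (-4 : ℝ) * h ^ (4 * α - 4)
          + h ^ (2 * α) * (Real.log (h ^ (-α))) ^ 2 := by
  obtain ⟨he0, he1⟩ := hε
  have hd : 1 ≤ ε ^ (-2 : ℝ) :=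
    Real.one_le_rpow_of_pos_of_le_one_of_nonpos he0 he1.le (by norm_num)
  have h1 : ∀ᶠ h : ℝ in nhdsWithin 0 (Set.Ioi 0), h < 1 :=
    nhdsWithin_le_nhds (gt_mem_nhds one_pos)
  obtain ⟨u, hu, hsub⟩ := mem_nhdsGT_iff_exists_Ioc_subset.1
    ((eventually_aux α _ hα hd).and h1)
  refine ⟨u, hu, fun h hh k hk => ?_⟩
  obtain ⟨hc, hlt⟩ := hsub hh
  have h0 : 0 < h := hh.1
  have e1 : ε ^ (-4 : ℝ) = (ε ^ (-2 : ℝ)) ^ 2 := by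
    rw [← Real.rpow_natCast, ← Real.rpow_mul he0.le]; norm_num
  have e2 : h ^ (4 * α - 4) = (h ^ (2 * α - 2)) ^ 2 := by
    rw [← Real.rpow_natCast, ← Real.rpow_mul h0.le]; congr 1; push_cast; ring
  have e3 : h ^ (2 * α) = (h ^ α) ^ 2 := by
    rw [← Real.rpow_natCast, ← Real.rpow_mul h0.le]; congr 1; push_cast; ring
  have e4 : h ^ (2 * α - 2) = h ^ (-2 : ℝ) * (h ^ α) ^ 2 := by
    rw [← e3, ← Real.rpow_add h0]; congr 1; ring
  have hp : 0 < h ^ α := Real.rpow_pos_of_pos h0 _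
  have hL : 0 ≤ Real.log (h ^ (-α)) := Real.log_nonneg
    (Real.one_le_rpow_of_pos_of_le_one_of_nonpos h0 hlt.le (by linarith))
  have key := core_aux (h ^ α * Real.log (h ^ (-α))) ((2 * π * k * h ^ α) ^ 2)
    (16 * ε ^ (-2 : ℝ) * h ^ (2 * α - 2)) (by positivity) (by positivity)
    (by rw [e4]; nlinarith [mul_le_mul_of_nonneg_right hk (sq_nonneg (h ^ α))]) hc
  rw [e1, e2, e3]
  have hw : ((1 : ℂ) + ((h ^ α * Real.log (h ^ (-α)) : ℝ) : ℂ)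
              + 2 * (π : ℂ) * Complex.I * (k : ℂ) * ((h ^ α : ℝ) : ℂ))
      = ((1 + h ^ α * Real.log (h ^ (-α)) : ℝ) : ℂ)
        + ((2 * π * k * h ^ α : ℝ) : ℂ) * Complex.I := by
    push_cast; ring
  rw [hw, Complex.norm_add_mul_I, Real.log_sqrt (by positivity)]
  convert key using 1
  · congr 1; ring
  · ring
end

section
/- Let α > 1 and ε ∈ (0,1) be given, and set y = h^(−α)·exp(h^(−α)) so that ln(y) = h^(−α) + ln(h^(−α)). Then there exists h₀ > 0 such that for all h ∈ (0, h₀] and all integers k with 2π|k| ≤ 4·ε^(−1)·h^(−1), one has |Log(ln(y) + 2πik)| / |ln(y) + 2πik| ≤ 2·h^α·ln(h^(−α)), where Log denotes the principal branch of the complex logarithm (with imaginary part in (−π, π]). -/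
open Complex Real

theorem log_over_log_bound (α ε : ℝ) (hα : 1 < α) (hε : ε ∈ Set.Ioo (0:ℝ) 1) :
    ∃ h₀ > 0, ∀ h : ℝ, h ∈ Set.Ioc 0 h₀ → ∀ k : ℤ,
      2 * π * |(k : ℝ)| ≤ 4 * ε⁻¹ * h⁻¹ →
      ‖Complex.log
            (((Real.log (h ^ (-α) * Real.exp (h ^ (-α))) : ℝ) : ℂ)
              + 2 * (π : ℂ) * Complex.I * (k : ℂ))‖
          / ‖((Real.log (h ^ (-α) * Real.exp (h ^ (-α))) : ℝ) : ℂ)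
              + 2 * (π : ℂ) * Complex.I * (k : ℂ)‖
        ≤ 2 * h ^ α * Real.log (h ^ (-α)) := by
  have hC : 0 < 4 * ε⁻¹ := by
    have := inv_pos.mpr hε.1
    positivity
  set C := 4 * ε⁻¹ with hCdef
  have hlogC : 0 < Real.log (2 + C) := Real.log_pos (by linarith)
  have hpi := Real.pi_pos
  refine ⟨Real.exp (-(Real.log (2 + C) + π)), Real.exp_pos _, ?_⟩
  rintro h ⟨h0, hh⟩ k hk
  have hlogh : Real.log h ≤ -(Real.log (2 + C) + π) := by
    have := Real.log_le_log h0 hh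
    rwa [Real.log_exp] at this
  have hlogx : Real.log (h ^ (-α)) = -α * Real.log h := Real.log_rpow h0 _
  have hxpos : 0 < h ^ (-α) := Real.rpow_pos_of_pos h0 _
  have hinv : h ^ α = (h ^ (-α))⁻¹ := by
    rw [Real.rpow_neg h0.le, inv_inv]
  have hlx : Real.log (2 + C) + π ≤ Real.log (h ^ (-α)) := by
    rw [hlogx]; nlinarith
  have hhx : h⁻¹ ≤ h ^ (-α) := by
    rw [← Real.log_le_log_iff (inv_pos.mpr h0) hxpos, hlogx, Real.log_inv]
    nlinarith
  rw [hinv, Real.log_mul hxpos.ne' (Real.exp_pos _).ne', Real.log_exp]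
  set x := h ^ (-α) with hx
  have hlxx : Real.log x ≤ x := (Real.log_le_sub_one_of_pos hxpos).trans (by linarith)
  set z : ℂ := ((Real.log x + x : ℝ) : ℂ) + 2 * (π : ℂ) * Complex.I * (k : ℂ) with hz
  have hre : z.re = Real.log x + x := by
    simp [hz]
  have hzge : x ≤ ‖z‖ := by
    have := (le_abs_self _).trans (Complex.abs_re_le_norm z)
    rw [hre] at this
    linarith
  have hzpos : 0 < ‖z‖ := by linarith
  have hzle : ‖z‖ ≤ (2 + C) * x := by
    have h1 : ‖z‖ ≤ |Real.log x + x| + 2 * π * |(k:ℝ)| := by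
      refine (norm_add_le _ _).trans (le_of_eq ?_)
      rw [Complex.norm_real]
      simp [abs_of_pos hpi]
    rw [abs_of_pos (by linarith)] at h1
    nlinarith [mul_le_mul_of_nonneg_left hhx hC.le]
  have hx1 : 1 ≤ x := by
    by_contra hcon
    have := Real.log_nonpos hxpos.le (not_le.mp hcon).le
    linarith
  have hlogz : Real.log ‖z‖ ≤ Real.log (2 + C) + Real.log x := by
    rw [← Real.log_mul (by linarith) hxpos.ne']
    exact Real.log_le_log hzpos hzle
  have hlogz0 : 0 ≤ Real.log ‖z‖ := Real.log_nonneg (by linarith)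
  have hL : ‖Complex.log z‖ ≤ 2 * Real.log x := by
    have := Complex.norm_le_abs_re_add_abs_im (Complex.log z)
    rw [Complex.log_re, Complex.log_im, abs_of_nonneg hlogz0] at this
    have := Complex.abs_arg_le_pi z
    linarith
  calc ‖Complex.log z‖ / ‖z‖ ≤ (2 * Real.log x) / x := by
        apply div_le_div₀ (by linarith) hL hxpos hzge
    _ = 2 * x⁻¹ * Real.log x := by ring
end
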